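/- arXiv:math/0203162 — 3 statements merged into one kernel-verified Lean document; each statement's English description precedes it below -/
import Mathlib

section
/- Let K ⊂ ℝ² be a bounded, symmetric (K = −K) convex body, defining the norm ‖x‖_K = inf{t > 0 : x ∈ tK}. Let S ⊂ ℝ² be well-distributed (every unit square contains a point of S). If the distance set Δ_K(S) = {‖x − y‖_K : x, y ∈ S} is separated (all pairwise gaps between distinct elements are at least some c > 0), then for any angles θ₁ < θ₂, the boundary ∂K intersected with the open cone {r e^{iθ} : θ₁ < θ < θ₂, r > 0} contains a nondegenerate line segment. -/
open Set

lemma lemT0 (T : Set ℂ) (hinj : ∀ p ∈ T, ∀ q ∈ T, p.im = q.im → p = q)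
    (hc : ∀ p ∈ T, ∀ q ∈ T, ∀ r ∈ T, p.im < q.im → q.im < r.im →
      (r.re - q.re) * (q.im - p.im) < (q.re - p.re) * (r.im - q.im))
    (A B C : ℂ) (hA : A ∈ T) (hB : B ∈ T) (hC : C ∈ T) (hAB : A.im < B.im) (hBC : B.im < C.im)
    (l : ℝ) (hl : 0 < l) (w : ℂ) (hA' : l * A + w ∈ T) (hB' : l * B + w ∈ T)
    (hC' : l * C + w ∈ T) : w = 0 := by
  have s1 : ∀ p ∈ T, ∀ q ∈ T, ∀ r ∈ T, p.im < q.im → q.im < r.im →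
      (r.re - p.re) / (r.im - p.im) < (q.re - p.re) / (q.im - p.im) := by
    intro p hp q hq r hr h1 h2
    have := hc p hp q hq r hr h1 h2
    rw [div_lt_div_iff₀ (by linarith) (by linarith)]
    nlinarith
  have s2 : ∀ p ∈ T, ∀ q ∈ T, ∀ r ∈ T, p.im < q.im → q.im < r.im →
      (r.re - q.re) / (r.im - q.im) < (r.re - p.re) / (r.im - p.im) := by
    intro p hp q hq r hr h1 h2
    have := hc p hp q hq r hr h1 h2
    rw [div_lt_div_iff₀ (by linarith) (by linarith)]
    nlinarith
  have s1' : ∀ p ∈ T, ∀ q ∈ T, ∀ r ∈ T, p.im < q.im → q.im ≤ r.im →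
      (r.re - p.re) / (r.im - p.im) ≤ (q.re - p.re) / (q.im - p.im) := by
    intro p hp q hq r hr h1 h2
    rcases h2.lt_or_eq with h | h
    · exact (s1 p hp q hq r hr h1 h).le
    · rw [hinj q hq r hr h]
  have s2' : ∀ p ∈ T, ∀ q ∈ T, ∀ r ∈ T, p.im ≤ q.im → q.im < r.im →
      (r.re - q.re) / (r.im - q.im) ≤ (r.re - p.re) / (r.im - p.im) := by
    intro p hp q hq r hr h1 h2
    rcases h1.lt_or_eq with h | h
    · exact (s2 p hp q hq r hr h h2).le
    · rw [hinj p hp q hq h]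
  have t1 : ∀ a ∈ T, ∀ b ∈ T, ∀ a' ∈ T, ∀ b' ∈ T, a.im < b.im → a'.im < b'.im →
      (b.re - a.re) / (b.im - a.im) = (b'.re - a'.re) / (b'.im - a'.im) →
      a.im ≤ a'.im → b.im ≤ b'.im → a.im = a'.im ∧ b.im = b'.im := by
    intro a ha b hb a' ha' b' hb' h1 h2 he h3 h4
    rcases h3.lt_or_eq with h | h
    · have := s1' a ha b hb b' hb' h1 h4
      have := s2 a ha a' ha' b' hb' h h2
      linarith
    rcases h4.lt_or_eq with h' | h'
    · have := s1 a ha b hb b' hb' h1 h'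
      have := s2' a ha a' ha' b' hb' h3 h2
      linarith
    exact ⟨h, h'⟩
  have par : ∀ a b : ℂ, a.im < b.im →
      (b.re - a.re) / (b.im - a.im) =
        ((l * b + w : ℂ).re - (l * a + w : ℂ).re) / ((l * b + w : ℂ).im - (l * a + w : ℂ).im) := by
    intro a b h
    have h1 : (l * b + w : ℂ).re - (l * a + w : ℂ).re = l * (b.re - a.re) := by simp; ring
    have h2 : (l * b + w : ℂ).im - (l * a + w : ℂ).im = l * (b.im - a.im) := by simp; ring
    rw [h1, h2, mul_div_mul_left _ _ hl.ne']
  have im' : ∀ a : ℂ, (l * a + w : ℂ).im = l * a.im + w.im := by intro a; simp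
  have lt' : ∀ a b : ℂ, a.im < b.im → (l * a + w : ℂ).im < (l * b + w : ℂ).im := by
    intro a b h; rw [im', im']; nlinarith
  have k1 := t1 A hA B hB _ hA' _ hB' hAB (lt' _ _ hAB) (par _ _ hAB)
  have k2 := t1 _ hA' _ hB' A hA B hB (lt' _ _ hAB) hAB (par _ _ hAB).symm
  have k3 := t1 B hB C hC _ hB' _ hC' hBC (lt' _ _ hBC) (par _ _ hBC)
  have k4 := t1 _ hB' _ hC' B hB C hC (lt' _ _ hBC) hBC (par _ _ hBC).symm
  simp only [im'] at k1 k2 k3 k4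
  have hl1 : l = 1 ∧ w.im = 0 := by
    have hBA : 0 < B.im - A.im := by linarith
    have hCB : 0 < C.im - B.im := by linarith
    have hfin : (l * A.im + w.im = A.im ∧ l * B.im + w.im = B.im) ∨
        (l * B.im + w.im = B.im ∧ l * C.im + w.im = C.im) := by
      rcases le_total 1 l with h | h
      · have e1 : 0 ≤ (l - 1) * (B.im - A.im) := mul_nonneg (by linarith) hBA.le
        have e2 : 0 ≤ (l - 1) * (C.im - B.im) := mul_nonneg (by linarith) hCB.le
        rcases le_total B.im (l * B.im + w.im) with h' | h'
        · have := k3 h' (by nlinarith)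
          right; constructor <;> linarith [this.1, this.2]
        · have := k2 (by nlinarith) h'
          left; exact this
      · have e1 : 0 ≤ (1 - l) * (B.im - A.im) := mul_nonneg (by linarith) hBA.le
        have e2 : 0 ≤ (1 - l) * (C.im - B.im) := mul_nonneg (by linarith) hCB.le
        rcases le_total B.im (l * B.im + w.im) with h' | h'
        · have := k1 (by nlinarith) h'
          left; constructor <;> linarith [this.1, this.2]
        · have := k4 h' (by nlinarith)
          right; exact this
    have : l = 1 := by
      rcases hfin with ⟨h1, h2⟩ | ⟨h1, h2⟩
      · have : (l - 1) * (B.im - A.im) = 0 := by linarith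
        rcases mul_eq_zero.1 this with h | h <;> linarith
      · have : (l - 1) * (C.im - B.im) = 0 := by linarith
        rcases mul_eq_zero.1 this with h | h <;> linarith
    refine ⟨this, ?_⟩
    rcases hfin with ⟨h1, h2⟩ | ⟨h1, h2⟩ <;> rw [this] at h1 <;> linarith
  obtain ⟨h1, h2⟩ := hl1
  have := hinj _ hA' _ hA (by rw [im', h1, h2]; ring)
  rw [h1] at this
  simpa using this

lemma lemT (T : Set ℂ) (hinj : ∀ p ∈ T, ∀ q ∈ T, p.im = q.im → p = q)
    (hc : ∀ p ∈ T, ∀ q ∈ T, ∀ r ∈ T, p.im < q.im → q.im < r.im →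
      (r.re - q.re) * (q.im - p.im) < (q.re - p.re) * (r.im - q.im))
    (A B C : ℂ) (hA : A ∈ T) (hB : B ∈ T) (hC : C ∈ T) (hAB : A ≠ B) (hBC : B ≠ C) (hAC : A ≠ C)
    (l : ℝ) (hl : 0 < l) (w : ℂ) (hA' : l * A + w ∈ T) (hB' : l * B + w ∈ T)
    (hC' : l * C + w ∈ T) : w = 0 := by
  have key := lemT0 T hinj hc
  have h1 : A.im ≠ B.im := fun h => hAB (hinj _ hA _ hB h)
  have h2 : B.im ≠ C.im := fun h => hBC (hinj _ hB _ hC h)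
  have h3 : A.im ≠ C.im := fun h => hAC (hinj _ hA _ hC h)
  rcases h1.lt_or_gt with h1 | h1 <;> rcases h2.lt_or_gt with h2 | h2 <;>
    rcases h3.lt_or_gt with h3 | h3
  · exact key A B C hA hB hC h1 h2 l hl w hA' hB' hC'
  · linarith
  · exact key A C B hA hC hB h3 h2 l hl w hA' hC' hB'
  · exact key C A B hC hA hB h3 h1 l hl w hC' hA' hB'
  · exact key B A C hB hA hC h1 h3 l hl w hB' hA' hC'
  · exact key B C A hB hC hA h2 h3 l hl w hB' hC' hA'
  · linarith
  · exact key C B A hC hB hA h2 h1 l hl w hC' hB' hA'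

/-- strict convexity near 1 in absence of segments -/
lemma strictN (N : ℂ → ℝ) (hadd : ∀ x y, N (x + y) ≤ N x + N y)
    (hsmul : ∀ (t : ℝ) x, 0 ≤ t → N (t * x) = t * N x) (d : ℝ)
    (hno : ¬ ∃ A B : ℂ, A ≠ B ∧ ∀ z ∈ segment ℝ A B, N z = 1 ∧ ‖z - 1‖ < d)
    (p r : ℂ) (hp : N p = 1) (hr : N r = 1) (hpd : ‖p - 1‖ < d) (hrd : ‖r - 1‖ < d)
    (hpr : p ≠ r) (t : ℝ) (ht0 : 0 < t) (ht1 : t < 1) :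
    N (((1 - t : ℝ) : ℂ) * p + (t : ℂ) * r) < 1 := by
  have conv : ∀ (a b : ℝ) (x y : ℂ), 0 ≤ a → 0 ≤ b → N (a * x + b * y) ≤ a * N x + b * N y := by
    intro a b x y ha hb
    have := hadd (a * x) (b * y)
    rwa [hsmul a x ha, hsmul b y hb] at this
  by_contra hcon
  push Not at hcon
  apply hno
  refine ⟨p, r, hpr, ?_⟩
  rintro z ⟨a, s, ha, hs, has, rfl⟩
  constructor
  · have hz : N (a • p + s • r) ≤ 1 := by
      have := conv a s p r ha hs
      simp only [Complex.real_smul]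
      rw [hp, hr] at this; linarith
    refine le_antisymm hz ?_
    by_contra hlt
    push Not at hlt
    obtain rfl : a = 1 - s := by linarith
    simp only [Complex.real_smul] at hlt
    rcases le_or_gt t s with h | h
    · have hs0 : 0 < s := by linarith
      have e : ((1 - t : ℝ) : ℂ) * p + (t : ℂ) * r =
          ((1 - t / s : ℝ) : ℂ) * p + ((t / s : ℝ) : ℂ) * (((1 - s : ℝ) : ℂ) * p + (s : ℂ) * r) := by
        have : (s : ℂ) ≠ 0 := by exact_mod_cast hs0.ne'
        push_cast; field_simp; ring
      have hts : t / s ≤ 1 := by rw [div_le_one hs0]; exact h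
      have hts0 : 0 < t / s := by positivity
      have := conv (1 - t / s) (t / s) p (((1 - s : ℝ) : ℂ) * p + (s : ℂ) * r) (by linarith) hts0.le
      rw [← e, hp] at this
      nlinarith
    · have hs0 : 0 < 1 - s := by linarith
      have e : ((1 - t : ℝ) : ℂ) * p + (t : ℂ) * r =
          ((1 - (1 - t) / (1 - s) : ℝ) : ℂ) * r +
            (((1 - t) / (1 - s) : ℝ) : ℂ) * (((1 - s : ℝ) : ℂ) * p + (s : ℂ) * r) := by
        have : (1 - s : ℂ) ≠ 0 := by exact_mod_cast hs0.ne'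
        push_cast; field_simp; ring
      have hts : (1 - t) / (1 - s) ≤ 1 := by rw [div_le_one hs0]; linarith
      have hts0 : 0 < (1 - t) / (1 - s) := div_pos (by linarith) hs0
      have := conv (1 - (1 - t) / (1 - s)) ((1 - t) / (1 - s)) r
        (((1 - s : ℝ) : ℂ) * p + (s : ℂ) * r) (by linarith) hts0.le
      rw [← e, hr] at this
      nlinarith
  · have := (convex_ball (1 : ℂ) d) (x := p) (by simpa [dist_eq_norm] using hpd) (y := r)
      (by simpa [dist_eq_norm] using hrd) ha hs has
    simpa [dist_eq_norm] using this

/-- no three common points -/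
lemma noThree (N : ℂ → ℝ) (hadd : ∀ x y, N (x + y) ≤ N x + N y)
    (hsmul : ∀ (t : ℝ) x, 0 ≤ t → N (t * x) = t * N x) (d : ℝ)
    (hd : ∀ z, ‖z - 1‖ < d → N (z - 1) < 1)
    (hno : ¬ ∃ A B : ℂ, A ≠ B ∧ ∀ z ∈ segment ℝ A B, N z = 1 ∧ ‖z - 1‖ < d)
    (A B C : ℂ) (hAB : A ≠ B) (hBC : B ≠ C) (hAC : A ≠ C)
    (l : ℝ) (hl : 0 < l) (w : ℂ)
    (H : ∀ z, z = A ∨ z = B ∨ z = C → N z = 1 ∧ ‖z - 1‖ < d ∧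
      N (l * z + w) = 1 ∧ ‖l * z + w - 1‖ < d) : w = 0 := by
  have up : ∀ z, N z = 1 → ‖z - 1‖ < d → ∀ t : ℝ, 0 < t → 1 < N (z + t) := by
    intro z hz hzd t ht
    have h1 := hd z hzd
    have h2 := hadd (z + t) (t * (z - 1))
    rw [hsmul t _ ht.le] at h2
    have h3 : z + t + t * (z - 1) = ((1 + t : ℝ) : ℂ) * z := by push_cast; ring
    rw [h3, hsmul _ _ (by linarith), hz] at h2
    nlinarith
  refine lemT {z | N z = 1 ∧ ‖z - 1‖ < d} ?_ ?_ A B C ?_ ?_ ?_ hAB hBC hAC l hl w ?_ ?_ ?_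
  · rintro p ⟨hp, hp'⟩ q ⟨hq, hq'⟩ h
    rcases lt_trichotomy p.re q.re with h' | h' | h'
    · have := up p hp hp' (q.re - p.re) (by linarith)
      rw [show p + ((q.re - p.re : ℝ) : ℂ) = q by apply Complex.ext <;> simp [h]] at this
      linarith
    · exact Complex.ext h' h
    · have := up q hq hq' (p.re - q.re) (by linarith)
      rw [show q + ((p.re - q.re : ℝ) : ℂ) = p by apply Complex.ext <;> simp [h]] at this
      linarith
  · rintro p ⟨hp, hp'⟩ q ⟨hq, hq'⟩ r ⟨hr, hr'⟩ h1 h2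
    by_contra hcon
    push Not at hcon
    have hpos : 0 < r.im - p.im := by linarith
    set t : ℝ := (q.im - p.im) / (r.im - p.im) with ht
    have ht0 : 0 < t := div_pos (by linarith) hpos
    have ht1 : t < 1 := by rw [ht, div_lt_one hpos]; linarith
    have hlt := strictN N hadd hsmul d hno p r hp hr hp' hr' (by rintro rfl; linarith) t ht0 ht1
    have htm : t * (r.im - p.im) = q.im - p.im := by rw [ht]; field_simp
    set y : ℝ := (1 - t) * p.re + t * r.re - q.re with hy
    have hm : ((1 - t : ℝ) : ℂ) * p + (t : ℂ) * r = q + (y : ℂ) := by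
      apply Complex.ext
      · simp [hy]
      · simp; linarith
    rw [hm] at hlt
    have hy0 : 0 ≤ y := by
      by_contra hneg
      push Not at hneg
      have : y * (r.im - p.im) =
        (r.re - q.re) * (q.im - p.im) - (q.re - p.re) * (r.im - q.im) := by
        have : y * (r.im - p.im) = (p.re - q.re) * (r.im - p.im) +
          (t * (r.im - p.im)) * (r.re - p.re) := by rw [hy]; ring
        rw [this, htm]; ring
      nlinarith
    rcases hy0.lt_or_eq with h | h
    · linarith [up q hq hq' y h]
    · rw [← h] at hlt; simp [hq] at hlt
  · exact ⟨(H A (by simp)).1, (H A (by simp)).2.1⟩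
  · exact ⟨(H B (by simp)).1, (H B (by simp)).2.1⟩
  · exact ⟨(H C (by simp)).1, (H C (by simp)).2.1⟩
  · exact (H A (by simp)).2.2
  · exact (H B (by simp)).2.2
  · exact (H C (by simp)).2.2

lemma lemA (N : ℂ → ℝ) (hadd : ∀ x y, N (x + y) ≤ N x + N y)
    (hsmul : ∀ (t : ℝ) x, 0 ≤ t → N (t * x) = t * N x)
    (C : ℝ) (hC0 : 0 ≤ C) (hC : ∀ x, N x ≤ C * ‖x‖) (z : ℂ) (hz : N z = 1) (b d : ℝ) (hb : 0 ≤ b)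
    (hd : 0 < d) :
    ∀ᶠ R : ℝ in Filter.atTop, ∀ x : ℂ, ‖x - R * z‖ ≤ b → |N x - R| ≤ C * b ∧ 0 < N x ∧
      ‖(((N x)⁻¹ : ℝ) : ℂ) * x - z‖ < d := by
  filter_upwards [Filter.eventually_gt_atTop (C * b + (b + C * b * ‖z‖) / d),
    Filter.eventually_gt_atTop (C * b), Filter.eventually_gt_atTop 0] with R hR1 hR2 hR0 x hx
  have e1 : N x ≤ R + C * b := by
    have h1 := hadd (R * z) (x - R * z)
    have h2 := hC (x - R * z)
    rw [hsmul R z hR0.le, hz] at h1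
    have : C * ‖x - R * z‖ ≤ C * b := by gcongr
    rw [add_sub_cancel] at h1
    linarith
  have e2 : R ≤ N x + C * b := by
    have h1 := hadd x (R * z - x)
    have h2 := hC (R * z - x)
    rw [add_sub_cancel, hsmul R z hR0.le, hz] at h1
    rw [norm_sub_rev] at h2
    have : C * ‖x - R * z‖ ≤ C * b := by gcongr
    linarith
  have habs : |N x - R| ≤ C * b := abs_le.2 ⟨by linarith, by linarith⟩
  have hpos : 0 < N x := by linarith
  refine ⟨habs, hpos, ?_⟩
  have hne : ((N x : ℝ) : ℂ) ≠ 0 := by exact_mod_cast hpos.ne'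
  have e3 : (((N x)⁻¹ : ℝ) : ℂ) * x - z = (((N x)⁻¹ : ℝ) : ℂ) * ((x - R * z) + ((R - N x : ℝ) : ℂ) * z) := by
    push_cast; field_simp; ring
  have e4 : ‖(x - R * z) + ((R - N x : ℝ) : ℂ) * z‖ ≤ b + C * b * ‖z‖ := by
    refine (norm_add_le _ _).trans ?_
    rw [norm_mul, Complex.norm_real, Real.norm_eq_abs, abs_sub_comm]
    gcongr
  rw [e3, norm_mul, Complex.norm_real, Real.norm_eq_abs, abs_of_pos (inv_pos.2 hpos),
    inv_mul_lt_iff₀ hpos]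
  have : (b + C * b * ‖z‖) / d < N x := by linarith
  rw [div_lt_iff₀ hd] at this
  linarith

lemma arcSeq (N : ℂ → ℝ) (hadd : ∀ x y, N (x + y) ≤ N x + N y)
    (hsmul : ∀ (t : ℝ) x, 0 ≤ t → N (t * x) = t * N x)
    (C : ℝ) (hC0 : 0 ≤ C) (hC : ∀ x, N x ≤ C * ‖x‖) (h1 : N 1 = 1) (d : ℝ) (hd : 0 < d) :
    ∃ z : ℕ → ℂ, Function.Injective z ∧ ∀ j, N (z j) = 1 ∧ ‖z j - 1‖ < d := by
  have hcont : Continuous N := by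
    have : LipschitzWith ⟨C, hC0⟩ N := by
      refine LipschitzWith.of_le_add_mul _ fun x y => ?_
      have a1 := hadd y (x - y)
      have a2 := hC (x - y)
      rw [add_sub_cancel] at a1
      rw [dist_eq_norm]
      show N x ≤ N y + C * ‖x - y‖
      linarith
    exact this.continuous
  have c1 : Continuous fun t : ℝ => N (1 + t * Complex.I) := by fun_prop
  have c2 : ContinuousAt (fun t : ℝ => (((N (1 + t * Complex.I))⁻¹ : ℝ) : ℂ) * (1 + t * Complex.I)) 0 := by
    refine ContinuousAt.mul ?_ (by fun_prop)
    refine Complex.continuous_ofReal.continuousAt.comp ?_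
    refine ContinuousAt.inv₀ c1.continuousAt ?_
    simp [h1]
  have ev1 : ∀ᶠ t : ℝ in nhds 0, 0 < N (1 + t * Complex.I) :=
    c1.continuousAt.eventually (lt_mem_nhds (by simp [h1]))
  have ev2 : ∀ᶠ t : ℝ in nhds 0,
      ‖(((N (1 + t * Complex.I))⁻¹ : ℝ) : ℂ) * (1 + t * Complex.I) - 1‖ < d := by
    have := c2.eventually (Metric.ball_mem_nhds _ hd)
    simpa [h1, dist_eq_norm] using this
  obtain ⟨ε, hε, hball⟩ := Metric.eventually_nhds_iff.1 (ev1.and ev2)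
  have hsmall : ∀ j : ℕ, dist (ε / (j + 2)) 0 < ε := by
    intro j
    have : (0 : ℝ) ≤ j := by positivity
    rw [dist_zero_right, Real.norm_eq_abs, abs_of_pos (by positivity), div_lt_iff₀ (by positivity)]
    nlinarith
  refine ⟨fun j => (((N (1 + ((ε / (j + 2) : ℝ) : ℂ) * Complex.I))⁻¹ : ℝ) : ℂ) *
    (1 + ((ε / (j + 2) : ℝ) : ℂ) * Complex.I), ?_, ?_⟩
  · intro i j hij
    have pi := (hball (hsmall i)).1
    have pj := (hball (hsmall j)).1
    simp only at hij
    generalize N (1 + ((ε / (i + 2) : ℝ) : ℂ) * Complex.I) = ni at *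
    generalize N (1 + ((ε / (j + 2) : ℝ) : ℂ) * Complex.I) = nj at *
    have hre := congrArg Complex.re hij
    have him := congrArg Complex.im hij
    rw [Complex.re_ofReal_mul, Complex.re_ofReal_mul] at hre
    rw [Complex.im_ofReal_mul, Complex.im_ofReal_mul] at him
    simp only [Complex.add_re, Complex.one_re, Complex.re_ofReal_mul, Complex.I_re, mul_zero,
      add_zero, mul_one, Complex.add_im, Complex.one_im, Complex.im_ofReal_mul, Complex.I_im,
      zero_add] at hre him
    rw [hre] at him
    have := mul_left_cancel₀ (inv_pos.2 pj).ne' him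
    have hi : (0 : ℝ) < i + 2 := by positivity
    have hj : (0 : ℝ) < j + 2 := by positivity
    rw [div_eq_div_iff hi.ne' hj.ne'] at this
    have := mul_left_cancel₀ hε.ne' this
    have : (i : ℝ) = j := by linarith
    exact_mod_cast this
  · intro j
    have p := hball (hsmall j)
    refine ⟨?_, p.2⟩
    rw [hsmul _ _ (inv_pos.2 p.1).le]
    exact inv_mul_cancel₀ p.1.ne'

lemma core (N : ℂ → ℝ) (hadd : ∀ x y, N (x + y) ≤ N x + N y)
    (hsmul : ∀ (t : ℝ) x, 0 ≤ t → N (t * x) = t * N x)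
    (C : ℝ) (hC0 : 0 < C) (hC : ∀ x, N x ≤ C * ‖x‖) (h1 : N 1 = 1)
    (S : Set ℂ) (b : ℝ) (hb : 0 < b) (hWD : ∀ z : ℂ, ∃ s ∈ S, ‖s - z‖ ≤ b)
    (c : ℝ) (hc : 0 < c) (hsep : ∀ x ∈ S, ∀ y ∈ S, ∀ x' ∈ S, ∀ y' ∈ S,
      N (x - y) ≠ N (x' - y') → c ≤ |N (x - y) - N (x' - y')|) (d₀ : ℝ) (hd₀ : 0 < d₀) :
    ∃ A B : ℂ, A ≠ B ∧ ∀ z ∈ segment ℝ A B, N z = 1 ∧ ‖z - 1‖ < d₀ := by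
  by_contra hno₀
  set d := min d₀ (1 / C) with hdd
  have hd : 0 < d := lt_min hd₀ (by positivity)
  have hno : ¬ ∃ A B : ℂ, A ≠ B ∧ ∀ z ∈ segment ℝ A B, N z = 1 ∧ ‖z - 1‖ < d := by
    rintro ⟨A, B, hAB, h⟩
    exact hno₀ ⟨A, B, hAB, fun z hz => ⟨(h z hz).1, (h z hz).2.trans_le (min_le_left _ _)⟩⟩
  have hdN : ∀ z : ℂ, ‖z - 1‖ < d → N (z - 1) < 1 := by
    intro z hz
    have a1 := hC (z - 1)
    have a2 : ‖z - 1‖ < 1 / C := hz.trans_le (min_le_right _ _)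
    rw [lt_div_iff₀ hC0] at a2
    linarith
  obtain ⟨s0, hs0, hs0'⟩ := hWD 0
  obtain ⟨s1, hs1, hs1'⟩ := hWD ((3 * b : ℝ) : ℂ)
  have hne : s0 ≠ s1 := by
    rintro rfl
    have h := norm_sub_le (s0 - 0) (s0 - ((3 * b : ℝ) : ℂ))
    have e : (s0 - 0) - (s0 - ((3 * b : ℝ) : ℂ)) = ((3 * b : ℝ) : ℂ) := by ring
    rw [e, Complex.norm_real, Real.norm_eq_abs, abs_of_pos (by positivity)] at h
    linarith
  obtain ⟨z, hzinj, hz⟩ := arcSeq N hadd hsmul C hC0.le hC h1 (d / 2) (by positivity)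
  set b1 := b + ‖s0 - s1‖ with hb1
  have hb1p : 0 < b1 := by positivity
  set L := ⌊2 * (C * b1) / c⌋₊ with hL
  set M := (L + 1) * (L + 1) * 2 + 1 with hM
  have ev1 : ∀ᶠ R : ℝ in Filter.atTop, ∀ j ∈ Finset.range M, ∀ x : ℂ, ‖x - R * z j‖ ≤ b1 →
      |N x - R| ≤ C * b1 ∧ 0 < N x ∧ ‖(((N x)⁻¹ : ℝ) : ℂ) * x - z j‖ < d / 2 := by
    rw [Filter.eventually_all_finset]
    intro j _
    exact lemA N hadd hsmul C hC0.le hC (z j) (hz j).1 b1 (d / 2) hb1p.le (by positivity)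
  have ev2 : ∀ᶠ R : ℝ in Filter.atTop, ∀ i ∈ Finset.range M, ∀ j ∈ Finset.range M, i ≠ j →
      2 * b < R * ‖z i - z j‖ := by
    rw [Filter.eventually_all_finset]
    intro i _
    rw [Filter.eventually_all_finset]
    intro j _
    by_cases hij : i = j
    · simp [hij]
    · have : 0 < ‖z i - z j‖ := norm_pos_iff.2 (sub_ne_zero.2 fun h => hij (hzinj h))
      filter_upwards [Filter.eventually_gt_atTop (2 * b / ‖z i - z j‖)] with R hR _
      rwa [div_lt_iff₀ this] at hR
  obtain ⟨R, hR1, hR2, hR0⟩ := (ev1.and (ev2.and (Filter.eventually_gt_atTop 0))).exists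
  choose P hPS hP using fun j : ℕ => hWD (s0 + R * z j)
  have n0 : ∀ j, ‖(P j - s0) - R * z j‖ ≤ b1 := by
    intro j
    have : (P j - s0) - R * z j = P j - (s0 + R * z j) := by ring
    rw [this]
    linarith [hP j, norm_nonneg (s0 - s1)]
  have n1 : ∀ j, ‖(P j - s1) - R * z j‖ ≤ b1 := by
    intro j
    have : (P j - s1) - R * z j = (P j - (s0 + R * z j)) + (s0 - s1) := by ring
    rw [this]
    exact (norm_add_le _ _).trans (by linarith [hP j])
  have hPinj : ∀ i ∈ Finset.range M, ∀ j ∈ Finset.range M, i ≠ j → P i ≠ P j := by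
    intro i hi j hj hij hPP
    have h := hR2 i hi j hj hij
    have a1 := hP i
    have a2 := hP j
    rw [hPP] at a1
    have a3 := norm_sub_le (P j - (s0 + R * z j)) (P j - (s0 + R * z i))
    have e : (P j - (s0 + R * z j)) - (P j - (s0 + R * z i)) = (R : ℂ) * (z i - z j) := by ring
    rw [e, norm_mul, Complex.norm_real, Real.norm_eq_abs, abs_of_pos hR0] at a3
    linarith
  have fl : ∀ v : ℝ, |v - R| ≤ C * b1 → 0 ≤ (v - R + C * b1) / c ∧
      ⌊(v - R + C * b1) / c⌋₊ ∈ Finset.range (L + 1) := by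
    intro v hv
    have := abs_le.1 hv
    refine ⟨div_nonneg (by linarith) hc.le, ?_⟩
    rw [Finset.mem_range, Nat.lt_succ_iff]
    apply Nat.floor_le_floor
    gcongr
    linarith
  have feq : ∀ v v' : ℝ, |v - R| ≤ C * b1 → |v' - R| ≤ C * b1 →
      ⌊(v - R + C * b1) / c⌋₊ = ⌊(v' - R + C * b1) / c⌋₊ → |v - v'| < c := by
    intro v v' hv hv' h
    have g1 := Nat.floor_le (fl v hv).1
    have g2 := Nat.lt_floor_add_one ((v - R + C * b1) / c)
    have g3 := Nat.floor_le (fl v' hv').1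
    have g4 := Nat.lt_floor_add_one ((v' - R + C * b1) / c)
    rw [← h] at g3 g4
    rw [le_div_iff₀ hc] at g1 g3
    rw [div_lt_iff₀ hc] at g2 g4
    rw [abs_lt]
    constructor <;> linarith
  obtain ⟨y, -, hy⟩ := Finset.exists_lt_card_fiber_of_mul_lt_card_of_maps_to
    (s := Finset.range M) (t := Finset.range (L + 1) ×ˢ Finset.range (L + 1)) (n := 2)
    (f := fun j => (⌊(N (P j - s0) - R + C * b1) / c⌋₊, ⌊(N (P j - s1) - R + C * b1) / c⌋₊))
    (by
      intro j hj
      rw [Finset.mem_product]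
      exact ⟨(fl _ (hR1 j hj _ (n0 j)).1).2, (fl _ (hR1 j hj _ (n1 j)).1).2⟩)
    (by simp [hM])
  obtain ⟨i, hi, j, hj, k, hk, hij, hik, hjk⟩ := Finset.two_lt_card.1 hy
  rw [Finset.mem_filter] at hi hj hk
  have same : ∀ m ∈ Finset.range M, (fun j => (⌊(N (P j - s0) - R + C * b1) / c⌋₊,
      ⌊(N (P j - s1) - R + C * b1) / c⌋₊)) m = y →
      N (P m - s0) = N (P i - s0) ∧ N (P m - s1) = N (P i - s1) := by
    intro m hm hmy
    have hh := hmy.trans hi.2.symm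
    simp only [Prod.mk.injEq] at hh
    have q1 := feq _ _ (hR1 m hm _ (n0 m)).1 (hR1 i hi.1 _ (n0 i)).1 hh.1
    have q2 := feq _ _ (hR1 m hm _ (n1 m)).1 (hR1 i hi.1 _ (n1 i)).1 hh.2
    constructor
    · by_contra hcon
      exact absurd (hsep _ (hPS m) _ hs0 _ (hPS i) _ hs0 hcon) (by linarith)
    · by_contra hcon
      exact absurd (hsep _ (hPS m) _ hs1 _ (hPS i) _ hs1 hcon) (by linarith)
  have p0 := (hR1 i hi.1 _ (n0 i)).2.1
  have p1 := (hR1 i hi.1 _ (n1 i)).2.1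
  set d0 := N (P i - s0) with hd0
  set d1 := N (P i - s1) with hd1
  have c0 : (d0 : ℂ) ≠ 0 := by exact_mod_cast p0.ne'
  have c1 : (d1 : ℂ) ≠ 0 := by exact_mod_cast p1.ne'
  have good : ∀ m ∈ Finset.range M, N (P m - s0) = d0 ∧ N (P m - s1) = d1 →
      N (((d0⁻¹ : ℝ) : ℂ) * (P m - s0)) = 1 ∧ ‖((d0⁻¹ : ℝ) : ℂ) * (P m - s0) - 1‖ < d ∧
      N (((d0 / d1 : ℝ) : ℂ) * (((d0⁻¹ : ℝ) : ℂ) * (P m - s0)) + (s0 - s1) / d1) = 1 ∧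
      ‖((d0 / d1 : ℝ) : ℂ) * (((d0⁻¹ : ℝ) : ℂ) * (P m - s0)) + (s0 - s1) / d1 - 1‖ < d := by
    rintro m hm ⟨e0, e1⟩
    have e : ((d0 / d1 : ℝ) : ℂ) * (((d0⁻¹ : ℝ) : ℂ) * (P m - s0)) + (s0 - s1) / d1 =
        ((d1⁻¹ : ℝ) : ℂ) * (P m - s1) := by
      push_cast; field_simp; ring
    rw [e, hsmul _ _ (inv_pos.2 p0).le, hsmul _ _ (inv_pos.2 p1).le, e0, e1]
    have r0 := (hR1 m hm _ (n0 m)).2.2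
    have r1 := (hR1 m hm _ (n1 m)).2.2
    rw [e0] at r0
    rw [e1] at r1
    have r2 := (hz m).2
    have tri : ∀ u : ℂ, ‖u - z m‖ < d / 2 → ‖u - 1‖ < d := by
      intro u hu
      have := norm_add_le (u - z m) (z m - 1)
      rw [sub_add_sub_cancel] at this
      linarith
    exact ⟨inv_mul_cancel₀ p0.ne', tri _ r0, inv_mul_cancel₀ p1.ne', tri _ r1⟩
  have ne : ∀ m ∈ Finset.range M, ∀ n ∈ Finset.range M, m ≠ n →
      ((d0⁻¹ : ℝ) : ℂ) * (P m - s0) ≠ ((d0⁻¹ : ℝ) : ℂ) * (P n - s0) := by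
    intro m hm n hn hmn h
    have : ((d0⁻¹ : ℝ) : ℂ) ≠ 0 := by push_cast; exact inv_ne_zero c0
    have := mul_left_cancel₀ this h
    exact hPinj m hm n hn hmn (sub_left_injective this)
  have w0 := noThree N hadd hsmul d hdN hno _ _ _ (ne i hi.1 j hj.1 hij) (ne j hj.1 k hk.1 hjk)
    (ne i hi.1 k hk.1 hik) (d0 / d1) (by positivity) ((s0 - s1) / d1) (by
      rintro u (rfl | rfl | rfl)
      · exact good i hi.1 (same i hi.1 hi.2)
      · exact good j hj.1 (same j hj.1 hj.2)
      · exact good k hk.1 (same k hk.1 hk.2))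
  rcases div_eq_zero_iff.1 w0 with h | h
  · exact hne (sub_eq_zero.1 h)
  · exact c1 h

theorem stmt_10 (K : Set ℂ) (hK : Convex ℝ K) (hb : Bornology.IsBounded K)
    (hsym : K = -K) (hint : (interior K).Nonempty)
    (S : Set ℂ)
    (hWD : ∀ a b : ℝ, ∃ s ∈ S, s.re ∈ Icc a (a + 1) ∧ s.im ∈ Icc b (b + 1))
    (hsep : ∃ c > 0, ∀ x ∈ S, ∀ y ∈ S, ∀ x' ∈ S, ∀ y' ∈ S,
      gauge K (x - y) ≠ gauge K (x' - y') →
      c ≤ |gauge K (x - y) - gauge K (x' - y')|)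
    (θ₁ θ₂ : ℝ) (hθ : θ₁ < θ₂) :
    ∃ A B : ℂ, A ≠ B ∧ segment ℝ A B ⊆ frontier K ∩
      {z : ℂ | ∃ r θ : ℝ, 0 < r ∧ θ₁ < θ ∧ θ < θ₂ ∧
        z = r * Complex.exp (θ * Complex.I)} := by
  have h0 : K ∈ nhds (0 : ℂ) := by
    obtain ⟨p, hp⟩ := hint
    have hp' : -p ∈ interior K := by
      have h := (Homeomorph.neg ℂ).preimage_interior K
      have h2 : (Homeomorph.neg ℂ) ⁻¹' K = K := hsym.symm
      rw [h2] at h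
      rw [← h] at hp
      exact hp
    have := hK.interior hp hp' (by norm_num : (0 : ℝ) ≤ 1 / 2) (by norm_num : (0 : ℝ) ≤ 1 / 2)
      (by norm_num)
    rw [smul_neg, add_neg_cancel] at this
    exact mem_interior_iff_mem_nhds.1 this
  have habs : Absorbent ℝ K := absorbent_nhds_zero h0
  have hpos : ∀ x : ℂ, x ≠ 0 → 0 < gauge K x := fun x hx =>
    (gauge_pos habs (NormedSpace.isVonNBounded_of_isBounded ℝ hb)).2 hx
  have hsm : ∀ (t : ℝ) (x : ℂ), 0 ≤ t → gauge K (t * x) = t * gauge K x := by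
    intro t x ht
    have := gauge_smul_of_nonneg (s := K) ht x
    simpa using this
  obtain ⟨r, hr, hball⟩ := Metric.mem_nhds_iff.1 h0
  have hle : ∀ x : ℂ, gauge K x ≤ r⁻¹ * ‖x‖ := by
    intro x
    have := mul_gauge_le_norm (x := x) hball
    rw [inv_mul_eq_div, le_div_iff₀ hr]
    linarith
  set θ := (θ₁ + θ₂) / 2 with hθm
  set e0 := Complex.exp (θ * Complex.I) with he0
  have he0ne : e0 ≠ 0 := Complex.exp_ne_zero _
  set g := gauge K e0 with hg
  have hgp : 0 < g := hpos _ he0ne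
  set e : ℂ := ((g⁻¹ : ℝ) : ℂ) * e0 with he
  have hene : e ≠ 0 := mul_ne_zero (by exact_mod_cast (inv_pos.2 hgp).ne') he0ne
  have hge : gauge K e = 1 := by rw [he, hsm _ _ (inv_pos.2 hgp).le]; exact inv_mul_cancel₀ hgp.ne'
  have harg : ∀ᶠ u : ℂ in nhds 1, u ≠ 0 ∧ |u.arg| < (θ₂ - θ₁) / 2 := by
    have c1 : ContinuousAt Complex.arg 1 := Complex.continuousAt_arg (by simp)
    have c2 : ContinuousAt (fun u : ℂ => |u.arg|) 1 := c1.abs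
    exact (eventually_ne_nhds one_ne_zero).and
      (c2.eventually (gt_mem_nhds (by simp; linarith)))
  obtain ⟨d, hd, hdb⟩ := Metric.eventually_nhds_iff.1 harg
  obtain ⟨c, hc, hsep⟩ := hsep
  have hen : 0 < ‖e‖ := norm_pos_iff.2 hene
  obtain ⟨A, B, hAB, hseg⟩ := core (fun u => gauge K (e * u))
    (fun x y => by simp only [mul_add]; exact gauge_add_le hK habs _ _)
    (fun t x ht => by
      rw [show e * (t * x) = t * (e * x) by ring]; exact hsm t _ ht)
    (r⁻¹ * ‖e‖) (by positivity)
    (fun x => by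
      have := hle (e * x)
      rw [norm_mul] at this
      linarith)
    (by simpa using hge) {u | e * u ∈ S} (2 / ‖e‖) (by positivity)
    (fun z => by
      obtain ⟨s, hs, ⟨h1, h2⟩, h3, h4⟩ := hWD (e * z).re (e * z).im
      refine ⟨e⁻¹ * s, by simpa [mul_inv_cancel_left₀ hene] using hs, ?_⟩
      have : e⁻¹ * s - z = e⁻¹ * (s - e * z) := by field_simp
      rw [this, norm_mul, norm_inv, inv_mul_eq_div]
      gcongr
      refine (Complex.norm_le_abs_re_add_abs_im _).trans ?_
      rw [Complex.sub_re, Complex.sub_im, abs_of_nonneg (by linarith), abs_of_nonneg (by linarith)]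
      linarith)
    c hc
    (fun x hx y hy x' hx' y' hy' h => by
      simp only [mul_sub] at h ⊢
      exact hsep _ hx _ hy _ hx' _ hy' h)
    d hd
  refine ⟨e * A, e * B, fun h => hAB (mul_left_cancel₀ hene h), ?_⟩
  rintro _ ⟨a, b, ha, hb', hab, rfl⟩
  obtain ⟨k1, k2⟩ := hseg (a • A + b • B) ⟨a, b, ha, hb', hab, rfl⟩
  have ez : a • (e * A) + b • (e * B) = e * (a • A + b • B) := by
    simp only [Complex.real_smul]; ring
  rw [ez]
  generalize a • A + b • B = u at k1 k2
  refine ⟨(gauge_eq_one_iff_mem_frontier hK h0).1 k1, ?_⟩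
  obtain ⟨hu, hua⟩ := hdb (by rwa [dist_eq_norm])
  have := abs_lt.1 hua
  refine ⟨g⁻¹ * ‖u‖, θ + u.arg, mul_pos (inv_pos.2 hgp) (norm_pos_iff.2 hu), by linarith,
    by linarith, ?_⟩
  have hpol := Complex.norm_mul_exp_arg_mul_I u
  push_cast
  rw [add_mul, Complex.exp_add, he, he0]
  nth_rewrite 1 [← hpol]
  push_cast
  ring
end

section
/- Let K ⊂ ℝ² be a bounded, symmetric convex body and S ⊂ ℝ² a well-distributed set. If the distance set Δ_K(S) is separated, then K is a polygon with finitely many sides. -/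
open Set

/-- A compact convex set cut out by finitely many half-spaces is a polytope. -/
lemma polytope_of_halfspaces (K : Set (ℝ × ℝ)) (hK : Convex ℝ K) (hcomp : IsCompact K)
    (N : Set ((ℝ × ℝ) →L[ℝ] ℝ)) (hN : N.Finite)
    (hKN : ∀ x, x ∈ K ↔ ∀ n ∈ N, n x ≤ 1) :
    ∃ F : Finset (ℝ × ℝ), K = convexHull ℝ (F : Set (ℝ × ℝ)) := by
  have hfin : (K.extremePoints ℝ).Finite := by
    let A : (ℝ × ℝ) → Set ((ℝ × ℝ) →L[ℝ] ℝ) := fun u => {n | n ∈ N ∧ n u = 1}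
    have hinj : Set.InjOn A (K.extremePoints ℝ) := by
      intro u hu u' hu' hA
      by_contra hne
      have huK := hu.1
      have hu'K := hu'.1
      have hstep : ∃ t : ℝ, 0 < t ∧ ∀ n ∈ N, n (u - t • (u' - u)) ≤ 1 := by
        have hev : ∀ n ∈ N, ∀ᶠ t : ℝ in nhdsWithin 0 (Ioi 0), n (u - t • (u' - u)) ≤ 1 := by
          intro n hn
          by_cases h1 : n u = 1
          · have h2 : n u' = 1 := by
              have : n ∈ A u := ⟨hn, h1⟩
              rw [hA] at this
              exact this.2
            refine Filter.Eventually.of_forall fun t => ?_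
            simp [h1, h2]
          · have hlt : n u < 1 := lt_of_le_of_ne ((hKN u).1 huK n hn) h1
            have hc : Continuous fun t : ℝ => n (u - t • (u' - u)) := by fun_prop
            have h0 : n (u - (0:ℝ) • (u' - u)) < 1 := by simpa using hlt
            have := (hc.tendsto 0).eventually (gt_mem_nhds h0)
            exact (this.filter_mono nhdsWithin_le_nhds).mono fun t ht => ht.le
        have hall := (Filter.eventually_all_finite hN).2 hev
        have hpos : ∀ᶠ t : ℝ in nhdsWithin 0 (Ioi 0), 0 < t := self_mem_nhdsWithin
        obtain ⟨t, ht1, ht2⟩ := (hpos.and hall).exists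
        exact ⟨t, ht1, ht2⟩
      obtain ⟨t, ht, htK⟩ := hstep
      have hmem : u - t • (u' - u) ∈ K := (hKN _).2 htK
      have hseg : u ∈ openSegment ℝ (u - t • (u' - u)) u' := by
        refine ⟨1 / (1 + t), t / (1 + t), by positivity, by positivity, by field_simp, ?_⟩
        ext <;> simp <;> field_simp <;> ring
      have := hu.2 hmem hu'K hseg
      have h3 : t • (u' - u) = 0 := by
        rw [sub_eq_self] at this; exact this
      rcases smul_eq_zero.1 h3 with h | h
      · exact ht.ne' h
      · exact hne (sub_eq_zero.1 h).symm
    refine Set.Finite.of_finite_image ?_ hinj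
    refine hN.finite_subsets.subset ?_
    rintro _ ⟨u, _, rfl⟩
    exact fun n hn => hn.1
  refine ⟨hfin.toFinset, ?_⟩
  rw [hfin.coe_toFinset, ← (hfin.isClosed_convexHull ℝ).closure_eq, closure_convexHull_extremePoints hcomp hK]

/-- Asymptotics of a positively homogeneous function along a ray of differentiability. -/
lemma homog_asymp (f : ℝ × ℝ → ℝ) (hom : ∀ r : ℝ, 0 ≤ r → ∀ x, f (r • x) = r * f x)
    (u : ℝ × ℝ) (L : (ℝ × ℝ) →L[ℝ] ℝ) (hL : HasFDerivAt f L u) (B ε : ℝ) (hB : 0 < B)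
    (hε : 0 < ε) :
    ∃ R0 : ℝ, 0 < R0 ∧ ∀ r ≥ R0, ∀ w, ‖w‖ ≤ B → |f (r • u + w) - r * f u - L w| ≤ ε := by
  have h := (hasFDerivAt_iff_isLittleO_nhds_zero.1 hL).def (c := ε / B) (by positivity)
  obtain ⟨δ, hδ, hd⟩ := Metric.eventually_nhds_iff.1 h
  refine ⟨2 * B / δ, by positivity, fun r hr w hw => ?_⟩
  have hr0 : 0 < r := lt_of_lt_of_le (by positivity) hr
  have hn : ‖r⁻¹ • w‖ = r⁻¹ * ‖w‖ := by
    rw [norm_smul, Real.norm_of_nonneg (by positivity)]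
  have h1 : dist (r⁻¹ • w) 0 < δ := by
    rw [dist_zero_right, hn]
    have : 2 * B ≤ r * δ := by
      rwa [ge_iff_le, div_le_iff₀ hδ] at hr
    rw [inv_mul_lt_iff₀ hr0]
    linarith
  have h2 := hd h1
  rw [hn, Real.norm_eq_abs] at h2
  have h3 : f (r • u + w) - r * f u - L w = r * (f (u + r⁻¹ • w) - f u - L (r⁻¹ • w)) := by
    have : r • u + w = r • (u + r⁻¹ • w) := by
      rw [smul_add, smul_inv_smul₀ hr0.ne']
    rw [this, hom r hr0.le, map_smul, smul_eq_mul]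
    field_simp
  rw [h3, abs_mul, abs_of_pos hr0]
  calc r * |f (u + r⁻¹ • w) - f u - L (r⁻¹ • w)| ≤ r * (ε / B * (r⁻¹ * ‖w‖)) := by gcongr
    _ = ε / B * ‖w‖ := by field_simp
    _ ≤ ε / B * B := by gcongr
    _ = ε := by field_simp

lemma floor_sep (c a b : ℝ) (hc : 0 < c) (hne : a ≠ b → c ≤ |a - b|) (R : ℝ)
    (h : ⌊(a - R) / c⌋ = ⌊(b - R) / c⌋) : a = b := by
  by_contra hab
  have h1 := hne hab
  have h2 := Int.abs_sub_lt_one_of_floor_eq_floor h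
  rw [← sub_div, abs_div, abs_of_pos hc, div_lt_one hc] at h2
  have : a - R - (b - R) = a - b := by ring
  rw [this] at h2
  linarith

/-- The counting argument: only finitely many directional derivatives. -/
lemma finite_deriv (f : ℝ × ℝ → ℝ) (hom : ∀ r : ℝ, 0 ≤ r → ∀ x, f (r • x) = r * f x)
    (hadd : ∀ x y, f (x + y) ≤ f x + f y) (hneg : ∀ x, f (-x) = f x)
    (hpos : ∀ x, x ≠ 0 → 0 < f x) (A : ℝ) (hA : 0 < A) (hfA : ∀ x, f x ≤ A * ‖x‖)
    (S : Set (ℝ × ℝ)) (C : ℝ) (hC : 0 < C) (hS : ∀ p : ℝ × ℝ, ∃ z ∈ S, ‖z - p‖ ≤ C)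
    (c : ℝ) (hc : 0 < c)
    (hsep : ∀ x ∈ S, ∀ y ∈ S, ∀ x' ∈ S, ∀ y' ∈ S,
      f (x - y) ≠ f (x' - y') → c ≤ |f (x - y) - f (x' - y')|)
    (x y : ℝ × ℝ) (hx : x ∈ S) (hy : y ∈ S) :
    {l : ℝ | ∃ (u : ℝ × ℝ) (L : (ℝ × ℝ) →L[ℝ] ℝ), u ≠ 0 ∧ HasFDerivAt f L u ∧ l = L (y - x)}.Finite := by
  by_contra hinf
  replace hinf : Set.Infinite _ := hinf
  have hlip : ∀ a b, |f (a + b) - f a| ≤ A * ‖b‖ := by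
    intro a b
    have h1 := hadd a b
    have h2 := hadd (a + b) (-b)
    rw [hneg, add_neg_cancel_right] at h2
    have h3 := hfA b
    rw [abs_le]; constructor <;> linarith
  set B : ℝ := C + ‖y - x‖ with hBdef
  have hB : 0 < B := by positivity
  let J : Finset (ℤ × ℤ) := Finset.Icc ⌊(-(A * B)) / c⌋ ⌊(A * B) / c⌋ ×ˢ
    Finset.Icc ⌊(-(A * B)) / c⌋ ⌊(A * B) / c⌋
  obtain ⟨T, hT, hTcard⟩ := hinf.exists_subset_card_eq (J.card + 1)
  have hch : ∀ l : T, ∃ (u : ℝ × ℝ) (L : (ℝ × ℝ) →L[ℝ] ℝ), u ≠ 0 ∧ HasFDerivAt f L u ∧ (l : ℝ) = L (y - x) :=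
    fun l => hT l.2
  choose u L hu hL hl using hch
  -- a common gap
  obtain ⟨ε, hε, hgap⟩ : ∃ ε : ℝ, 0 < ε ∧ ∀ a ∈ T, ∀ b ∈ T, |a - b| ≤ 4 * ε → a = b := by
    have : ∀ᶠ ε : ℝ in nhdsWithin 0 (Ioi 0), ∀ a ∈ T, ∀ b ∈ T, |a - b| ≤ 4 * ε → a = b := by
      rw [Filter.eventually_all_finset]
      intro a _
      rw [Filter.eventually_all_finset]
      intro b _
      by_cases hab : a = b
      · exact Filter.Eventually.of_forall fun _ _ => hab
      · have h0 : 0 < |a - b| / 4 := by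
          have := abs_pos.2 (sub_ne_zero.2 hab); linarith
        have := (gt_mem_nhds h0).filter_mono (nhdsWithin_le_nhds (s := Ioi (0:ℝ)))
        filter_upwards [this] with e he hle
        linarith
    have hp : ∀ᶠ t : ℝ in nhdsWithin 0 (Ioi 0), 0 < t := self_mem_nhdsWithin
    obtain ⟨e, h1, h2⟩ := (hp.and this).exists
    exact ⟨e, h1, h2⟩
  have has := fun l : T => homog_asymp f hom (u l) (L l) (hL l) B ε hB hε
  choose R0 hR0 hR using has
  -- a common radius
  obtain ⟨R, hRpos, hRbig⟩ : ∃ R : ℝ, 0 < R ∧ ∀ l : T, R0 l ≤ R / f (u l) := by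
    have : ∀ᶠ R : ℝ in Filter.atTop, ∀ l : T, R0 l ≤ R / f (u l) := by
      rw [Filter.eventually_all]
      intro l
      filter_upwards [Filter.eventually_ge_atTop (R0 l * f (u l))] with R hR'
      rwa [le_div_iff₀ (hpos _ (hu l))]
    obtain ⟨R, h1, h2⟩ := ((Filter.eventually_gt_atTop (0:ℝ)).and this).exists
    exact ⟨R, h1, h2⟩
  have hz := fun l : T => hS (x + (R / f (u l)) • u l)
  choose z hzS hz using hz
  have hzx : ∀ l, ∃ w, ‖w‖ ≤ C ∧ z l - x = (R / f (u l)) • u l + w := fun l =>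
    ⟨z l - (x + (R / f (u l)) • u l), hz l, by abel⟩
  choose w hw hzw using hzx
  have hfR : ∀ l, f ((R / f (u l)) • u l) = R := fun l => by
    have := hpos _ (hu l)
    rw [hom _ (by positivity)]; field_simp
  have hzy : ∀ l, z l - y = (R / f (u l)) • u l + (w l - (y - x)) := fun l => by
    rw [← add_sub_assoc, ← hzw]; abel
  have hwB : ∀ l, ‖w l‖ ≤ B := fun l => (hw l).trans (by simp [hBdef])
  have hwB' : ∀ l, ‖w l - (y - x)‖ ≤ B := fun l =>
    (norm_sub_le _ _).trans (by have := hw l; linarith)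
  have hs : ∀ l, |f (z l - x) - R| ≤ A * B := fun l => by
    have := hlip ((R / f (u l)) • u l) (w l)
    rw [hfR, ← hzw] at this
    exact this.trans (by have := hwB l; gcongr)
  have ht : ∀ l, |f (z l - y) - R| ≤ A * B := fun l => by
    have := hlip ((R / f (u l)) • u l) (w l - (y - x))
    rw [hfR, ← hzy] at this
    exact this.trans (by have := hwB' l; gcongr)
  have hdiff : ∀ l, |f (z l - x) - f (z l - y) - l| ≤ 2 * ε := fun l => by
    have h1 := hR l _ (hRbig l) _ (hwB l)
    have h2 := hR l _ (hRbig l) _ (hwB' l)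
    rw [← hzw] at h1
    rw [← hzy, map_sub, ← hl] at h2
    rw [abs_le] at *
    constructor <;> linarith [h1.1, h1.2, h2.1, h2.2]
  let φ : T → ℤ × ℤ := fun l => (⌊(f (z l - x) - R) / c⌋, ⌊(f (z l - y) - R) / c⌋)
  have hφJ : ∀ l, φ l ∈ J := fun l => by
    have h1 := abs_le.1 (hs l)
    have h2 := abs_le.1 (ht l)
    simp only [φ, J, Finset.mem_product, Finset.mem_Icc]
    refine ⟨⟨Int.floor_le_floor ?_, Int.floor_le_floor ?_⟩,
      ⟨Int.floor_le_floor ?_, Int.floor_le_floor ?_⟩⟩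
    · have := h1.1; gcongr
    · have := h1.2; gcongr
    · have := h2.1; gcongr
    · have := h2.2; gcongr
  have hφinj : Function.Injective φ := by
    intro l m hlm
    have e1 := floor_sep c _ _ hc (hsep _ (hzS l) _ hx _ (hzS m) _ hx) R (congrArg Prod.fst hlm)
    have e2 := floor_sep c _ _ hc (hsep _ (hzS l) _ hy _ (hzS m) _ hy) R (congrArg Prod.snd hlm)
    have d1 := hdiff l
    have d2 := hdiff m
    rw [e1, e2] at d1
    apply Subtype.ext
    apply hgap _ l.2 _ m.2
    rw [abs_le] at *
    constructor <;> linarith [d1.1, d1.2, d2.1, d2.2]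
  have hcard : (Finset.univ : Finset T).card ≤ J.card :=
    Finset.card_le_card_of_injOn φ (fun l _ => hφJ l) hφinj.injOn
  rw [Finset.card_univ, Fintype.card_coe] at hcard
  omega

/-- Theorem 0.1: if `K ⊆ ℝ²` is a compact symmetric convex body, `S ⊆ ℝ²` is
well-distributed, and the `K`-distance set `Δ_K(S)` is separated, then `K` is
a polygon with finitely many sides (the convex hull of a finite set). -/
theorem stmt_12 (K : Set (ℝ × ℝ)) (hK : Convex ℝ K) (hcomp : IsCompact K)
    (hsym : K = -K) (hint : (interior K).Nonempty)
    (S : Set (ℝ × ℝ))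
    (hWD : ∃ C > 0, ∀ a b : ℝ, ∃ s ∈ S, s.1 ∈ Icc a (a + C) ∧ s.2 ∈ Icc b (b + C))
    (hsep : ∃ c > 0, ∀ x ∈ S, ∀ y ∈ S, ∀ x' ∈ S, ∀ y' ∈ S,
      gauge K (x - y) ≠ gauge K (x' - y') →
      c ≤ |gauge K (x - y) - gauge K (x' - y')|) :
    ∃ F : Finset (ℝ × ℝ), K = convexHull ℝ (F : Set (ℝ × ℝ)) := by
  obtain ⟨C, hC, hWD⟩ := hWD
  obtain ⟨c, hc, hsep⟩ := hsep
  have hsymm : ∀ x ∈ K, -x ∈ K := fun x hx => by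
    rw [hsym] at hx; exact hx
  have h0i : (0 : ℝ × ℝ) ∈ interior K := by
    obtain ⟨p, hp⟩ := hint
    have hnp : -p ∈ K := hsymm _ (interior_subset hp)
    have := hK.openSegment_interior_self_subset_interior hp hnp
    apply this
    exact ⟨1/2, 1/2, by norm_num, by norm_num, by norm_num, by simp⟩
  have h0 : K ∈ nhds (0 : ℝ × ℝ) := mem_interior_iff_mem_nhds.1 h0i
  have habs : Absorbent ℝ K := absorbent_nhds_zero h0
  have hvN : Bornology.IsVonNBounded ℝ K := (NormedSpace.isVonNBounded_iff ℝ).2 hcomp.isBounded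
  have hom : ∀ r : ℝ, 0 ≤ r → ∀ x, gauge K (r • x) = r * gauge K x := fun r hr x => by
    rw [gauge_smul_of_nonneg hr, smul_eq_mul]
  have hadd : ∀ x y, gauge K (x + y) ≤ gauge K x + gauge K y := gauge_add_le hK habs
  have hneg : ∀ x, gauge K (-x) = gauge K x := gauge_neg hsymm
  have hpos : ∀ x, x ≠ 0 → 0 < gauge K x := fun x hx => (gauge_pos habs hvN).2 hx
  obtain ⟨r, hr, hball⟩ := Metric.mem_nhds_iff.1 h0
  have hfA : ∀ x, gauge K x ≤ r⁻¹ * ‖x‖ := fun x => by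
    rw [le_inv_mul_iff₀ hr]
    exact mul_gauge_le_norm hball
  have hcont : Continuous (gauge K) := continuous_gauge hK h0
  have hlipW : ∃ A, LipschitzWith A (gauge K) := hK.lipschitz_gauge h0
  have hS : ∀ p : ℝ × ℝ, ∃ z ∈ S, ‖z - p‖ ≤ C := fun p => by
    obtain ⟨s, hs, h1, h2⟩ := hWD p.1 p.2
    refine ⟨s, hs, ?_⟩
    rw [Prod.norm_def, max_le_iff, Real.norm_eq_abs, Real.norm_eq_abs, abs_le, abs_le]
    simp only [Prod.fst_sub, Prod.snd_sub]
    refine ⟨⟨?_, ?_⟩, ?_, ?_⟩ <;> linarith [h1.1, h1.2, h2.1, h2.2]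
  have hfd := finite_deriv (gauge K) hom hadd hneg hpos r⁻¹ (by positivity) hfA S C hC hS c hc hsep
  obtain ⟨x, hx, hx1, hx2⟩ := hWD 0 0
  obtain ⟨y, hy, hy1, hy2⟩ := hWD (3 * C) 0
  obtain ⟨y', hy', hy1', hy2'⟩ := hWD 0 (3 * C)
  have hdet : 0 < (y - x).1 * (y' - x).2 - (y - x).2 * (y' - x).1 := by
    simp only [Prod.fst_sub, Prod.snd_sub]
    have a1 : 2 * C ≤ y.1 - x.1 := by linarith [hy1.1, hx1.2]
    have a2 : 2 * C ≤ y'.2 - x.2 := by linarith [hy2'.1, hx2.2]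
    have a3 : |y.2 - x.2| ≤ C := by
      rw [abs_le]; constructor <;> linarith [hy2.1, hy2.2, hx2.1, hx2.2]
    have a4 : |y'.1 - x.1| ≤ C := by
      rw [abs_le]; constructor <;> linarith [hy1'.1, hy1'.2, hx1.1, hx1.2]
    have a5 : |(y.2 - x.2) * (y'.1 - x.1)| ≤ C * C := by
      rw [abs_mul]; gcongr
    have a6 : (2 * C) * (2 * C) ≤ (y.1 - x.1) * (y'.2 - x.2) := by
      gcongr
      linarith
    nlinarith [(abs_le.1 a5).2, mul_pos hC hC]
  let N : Set ((ℝ × ℝ) →L[ℝ] ℝ) := {L | ∃ u, u ≠ 0 ∧ HasFDerivAt (gauge K) L u}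
  have hNfin : N.Finite := by
    have hprod := (hfd x y hx hy).prod (hfd x y' hx hy')
    let ψ : ((ℝ × ℝ) →L[ℝ] ℝ) → ℝ × ℝ := fun L => (L (y - x), L (y' - x))
    have hinj : Function.Injective ψ := by
      intro L M hLM
      have e1 : L (y - x) = M (y - x) := congrArg Prod.fst hLM
      have e2 : L (y' - x) = M (y' - x) := congrArg Prod.snd hLM
      have key : ∀ q : ℝ × ℝ, ((y - x).1 * (y' - x).2 - (y - x).2 * (y' - x).1) • q =
          (q.1 * (y' - x).2 - q.2 * (y' - x).1) • (y - x) +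
          ((y - x).1 * q.2 - (y - x).2 * q.1) • (y' - x) := by
        intro q
        ext <;> simp <;> ring
      refine ContinuousLinearMap.ext fun q => ?_
      apply mul_left_cancel₀ hdet.ne'
      have k1 := congrArg L (key q)
      have k2 := congrArg M (key q)
      simp only [map_add, map_smul, smul_eq_mul] at k1 k2
      rw [k1, k2, e1, e2]
    refine Set.Finite.of_finite_image (f := ψ) (hprod.subset ?_) hinj.injOn
    rintro _ ⟨L, ⟨u, hu, hL⟩, rfl⟩
    exact ⟨⟨u, L, hu, hL, rfl⟩, ⟨u, L, hu, hL, rfl⟩⟩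
  have hNle : ∀ L ∈ N, ∀ w, L w ≤ gauge K w := by
    rintro L ⟨u, hu, hL⟩ w
    refine le_of_forall_pos_le_add fun ε hε => ?_
    obtain ⟨R0, hR0, h⟩ := homog_asymp _ hom u L hL (‖w‖ + 1) ε (by positivity) hε
    have h1 := (abs_le.1 (h R0 le_rfl w (by linarith))).1
    have h2 := hadd (R0 • u) w
    rw [hom _ hR0.le] at h2
    linarith
  have hNeq : ∀ (u : ℝ × ℝ) (L : (ℝ × ℝ) →L[ℝ] ℝ), HasFDerivAt (gauge K) L u → gauge K u ≤ L u := by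
    intro u L hL
    refine le_of_forall_pos_le_add fun ε hε => ?_
    obtain ⟨R0, hR0, h⟩ := homog_asymp _ hom u L hL (‖u‖ + 1) ε (by positivity) hε
    have h1 := (abs_le.1 (h R0 le_rfl u (by linarith))).2
    have h2 : R0 • u + u = (R0 + 1) • u := by rw [add_smul, one_smul]
    rw [h2, hom _ (by positivity)] at h1
    linarith
  have hmem1 : ∀ w, w ∈ K ↔ gauge K w ≤ 1 := fun w => by
    rw [gauge_le_one_iff_mem_closure hK h0, hcomp.isClosed.closure_eq]
  have hdense : Dense {u : ℝ × ℝ | u ≠ 0 ∧ DifferentiableAt ℝ (gauge K) u} := by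
    obtain ⟨A, hA⟩ := hlipW
    have h1 := hA.ae_differentiableAt (μ := MeasureTheory.volume)
    have h2 : ∀ᵐ u : ℝ × ℝ, u ≠ 0 := by
      rw [MeasureTheory.ae_iff]; simp
    exact MeasureTheory.Measure.dense_of_ae (h2.and h1)
  refine polytope_of_halfspaces K hK hcomp N hNfin fun w => ⟨fun hw n hn => ?_, fun hw => ?_⟩
  · exact (hNle n hn w).trans ((hmem1 w).1 hw)
  · rw [hmem1]
    -- the dense set is covered by finitely many closed sets
    have hcl : IsClosed (⋃ L ∈ N, {u : ℝ × ℝ | gauge K u ≤ L u}) :=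
      hNfin.isClosed_biUnion fun L _ => isClosed_le hcont L.continuous
    have hsub : {u : ℝ × ℝ | u ≠ 0 ∧ DifferentiableAt ℝ (gauge K) u} ⊆
        ⋃ L ∈ N, {u : ℝ × ℝ | gauge K u ≤ L u} := by
      rintro u ⟨hu, hd⟩
      exact Set.mem_biUnion (⟨u, hu, hd.hasFDerivAt⟩ : fderiv ℝ (gauge K) u ∈ N)
        (hNeq u _ hd.hasFDerivAt)
    have hw' := hcl.closure_subset_iff.2 hsub (hdense w)
    simp only [Set.mem_iUnion] at hw'
    obtain ⟨L, hLN, hL⟩ := hw'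
    exact le_trans hL (hw L hLN)
end

section
/- If K ⊂ ℝ² is a bounded symmetric convex body whose boundary contains no line segment (i.e., K is strictly convex), and S ⊂ ℝ² is well-distributed, then Δ_K(S) is not separated. -/
open Set

/-- planar cross product -/
def crossD (u v : ℝ × ℝ) : ℝ := u.1 * v.2 - u.2 * v.1

lemma aux_no_meet (g : ℝ × ℝ → ℝ)
    (hhom : ∀ t : ℝ, 0 ≤ t → ∀ v, g (t • v) = t * g v)
    (hneg : ∀ v, g (-v) = g v)
    (hpos : ∀ v, v ≠ 0 → 0 < g v)
    (htri : ∀ u v, g (u + v) ≤ g u + g v)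
    (hst : ∀ u v, crossD u v ≠ 0 → g (u + v) < g u + g v)
    (e p q : ℝ × ℝ) (hp : 0 < crossD e p) (hq : 0 < crossD e q)
    (h1 : g p = g q) (h2 : g (p - e) = g (q - e)) (hγ : 0 < crossD p q) : False := by
  have hden : 0 < crossD p q + crossD e p := by linarith
  obtain ⟨t, ht⟩ : ∃ t, t = crossD e q / (crossD p q + crossD e p) := ⟨_, rfl⟩
  obtain ⟨s, hs⟩ : ∃ s, s = crossD e p / (crossD p q + crossD e p) := ⟨_, rfl⟩
  have ht0 : 0 < t := ht ▸ div_pos hq hden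
  have hs0 : 0 < s := hs ▸ div_pos hp hden
  have hs1 : s < 1 := by rw [hs, div_lt_one hden]; linarith
  have hm : t • p = (1 - s) • e + s • q := by
    have h3 : t * (crossD p q + crossD e p) = crossD e q := by rw [ht]; field_simp
    have h4 : s * (crossD p q + crossD e p) = crossD e p := by rw [hs]; field_simp
    have hne := hden.ne'
    ext
    · simp only [Prod.fst_add, Prod.smul_fst, smul_eq_mul]
      apply mul_right_cancel₀ hne
      rw [show t * p.1 * (crossD p q + crossD e p) = t * (crossD p q + crossD e p) * p.1 by ring, h3,
        show ((1 - s) * e.1 + s * q.1) * (crossD p q + crossD e p) = ((crossD p q + crossD e p) - s * (crossD p q + crossD e p)) * e.1 + s * (crossD p q + crossD e p) * q.1 by ring, h4]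
      simp only [crossD]; ring
    · simp only [Prod.snd_add, Prod.smul_snd, smul_eq_mul]
      apply mul_right_cancel₀ hne
      rw [show t * p.2 * (crossD p q + crossD e p) = t * (crossD p q + crossD e p) * p.2 by ring, h3,
        show ((1 - s) * e.2 + s * q.2) * (crossD p q + crossD e p) = ((crossD p q + crossD e p) - s * (crossD p q + crossD e p)) * e.2 + s * (crossD p q + crossD e p) * q.2 by ring, h4]
      simp only [crossD]; ring
  have gm : g (t • p) = t * g p := hhom t ht0.le p
  have gqm : g (q - t • p) = (1 - s) * g (q - e) := by
    rw [← hhom _ (by linarith), hm]; congr 1; module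
  have gme : g (t • p - e) = s * g (q - e) := by
    rw [← hhom _ hs0.le, hm]; congr 1; module
  have hcr : crossD (t • p) q = t * crossD p q := by
    simp only [crossD, Prod.smul_fst, Prod.smul_snd, smul_eq_mul]; ring
  have hcr0 : 0 < crossD (t • p) q := hcr ▸ mul_pos ht0 hγ
  rcases le_total t 1 with h | h
  · have gpm : g (p - t • p) = (1 - t) * g p := by
      rw [← hhom _ (by linarith)]; congr 1; module
    have e1 : g q < g (t • p) + g (q - t • p) := by
      have := hst (t • p) (q - t • p) (by
        have : crossD (t • p) (q - t • p) = crossD (t • p) q := by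
          simp only [crossD, Prod.fst_sub, Prod.snd_sub]; ring
        rw [this]; exact hcr0.ne')
      rwa [add_sub_cancel] at this
    have e2 : g (p - e) ≤ g (p - t • p) + g (t • p - e) := by
      have := htri (p - t • p) (t • p - e)
      rwa [sub_add_sub_cancel] at this
    rw [gm, gqm] at e1
    rw [gpm, gme] at e2
    nlinarith
  · have gpm : g (p - t • p) = (t - 1) * g p := by
      rw [← hhom _ (by linarith), ← hneg]; congr 1; module
    have gmq : g (t • p - q) = (1 - s) * g (q - e) := by
      rw [← gqm, ← hneg]; congr 1; module
    have e1 : g (t • p) < g q + g (t • p - q) := by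
      have := hst q (t • p - q) (by
        have : crossD q (t • p - q) = - crossD (t • p) q := by
          simp only [crossD, Prod.fst_sub, Prod.snd_sub]; ring
        rw [this]; exact (neg_neg_of_pos hcr0).ne)
      rwa [add_sub_cancel] at this
    have e2 : g (p - e) ≤ g (p - t • p) + g (t • p - e) := by
      have := htri (p - t • p) (t • p - e)
      rwa [sub_add_sub_cancel] at this
    rw [gm, gmq] at e1
    rw [gpm, gme] at e2
    nlinarith

lemma aux_unique (g : ℝ × ℝ → ℝ)
    (hhom : ∀ t : ℝ, 0 ≤ t → ∀ v, g (t • v) = t * g v)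
    (hneg : ∀ v, g (-v) = g v)
    (hpos : ∀ v, v ≠ 0 → 0 < g v)
    (htri : ∀ u v, g (u + v) ≤ g u + g v)
    (hst : ∀ u v, crossD u v ≠ 0 → g (u + v) < g u + g v)
    (e p q : ℝ × ℝ) (hp : 0 < crossD e p) (hq : 0 < crossD e q)
    (h1 : g p = g q) (h2 : g (p - e) = g (q - e)) : p = q := by
  rcases lt_trichotomy (crossD p q) 0 with h | h | h
  · exact (aux_no_meet g hhom hneg hpos htri hst e q p hq hp h1.symm h2.symm
      (by have : crossD q p = - crossD p q := by simp only [crossD]; ring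
          linarith)).elim
  · obtain ⟨t, ht⟩ : ∃ t, t = crossD e q / crossD e p := ⟨_, rfl⟩
    have ht0 : 0 < t := ht ▸ div_pos hq hp
    have h3 : t * crossD e p = crossD e q := by rw [ht]; field_simp
    have hqp : q = t • p := by
      have hne := hp.ne'
      ext
      · simp only [Prod.smul_fst, smul_eq_mul]
        apply mul_right_cancel₀ hne
        rw [show t * p.1 * crossD e p = t * crossD e p * p.1 by ring, h3]
        simp only [crossD] at h ⊢; linear_combination -e.1 * h
      · simp only [Prod.smul_snd, smul_eq_mul]
        apply mul_right_cancel₀ hne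
        rw [show t * p.2 * crossD e p = t * crossD e p * p.2 by ring, h3]
        simp only [crossD] at h ⊢; linear_combination -e.2 * h
    have hp0 : p ≠ 0 := by
      rintro rfl
      simp [crossD] at hp
    have hgp := hpos p hp0
    rw [hqp, hhom t ht0.le] at h1
    have : t = 1 := by
      apply mul_right_cancel₀ hgp.ne'
      linarith
    rw [hqp, this, one_smul]
  · exact (aux_no_meet g hhom hneg hpos htri hst e p q hp hq h1 h2 h).elim

set_option maxHeartbeats 1000000 in
lemma aux_count (g : ℝ × ℝ → ℝ)
    (hhom : ∀ t : ℝ, 0 ≤ t → ∀ v, g (t • v) = t * g v)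
    (hneg : ∀ v, g (-v) = g v)
    (hpos : ∀ v, v ≠ 0 → 0 < g v)
    (htri : ∀ u v, g (u + v) ≤ g u + g v)
    (hst : ∀ u v, crossD u v ≠ 0 → g (u + v) < g u + g v)
    (M : ℝ) (hM0 : 0 < M) (hM : ∀ v, g v ≤ M * ‖v‖)
    (S : Set (ℝ × ℝ)) (C : ℝ) (hC : 0 < C)
    (hWD : ∀ a b : ℝ, ∃ s ∈ S, s.1 ∈ Icc a (a + C) ∧ s.2 ∈ Icc b (b + C))
    (c : ℝ) (hc : 0 < c)
    (hsep : ∀ x ∈ S, ∀ y ∈ S, ∀ x' ∈ S, ∀ y' ∈ S,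
      g (x - y) ≠ g (x' - y') → c ≤ |g (x - y) - g (x' - y')|) : False := by
  have hg0 : ∀ v, 0 ≤ g v := by
    intro v
    rcases eq_or_ne v 0 with rfl | h
    · have := hhom 0 le_rfl 0
      simp at this; rw [this]
    · exact (hpos v h).le
  obtain ⟨x, hxS, hx1, hx2⟩ := hWD 0 0
  obtain ⟨y, hyS, hy1, hy2⟩ := hWD (2 * C) 0
  simp only [mem_Icc] at hx1 hx2 hy1 hy2
  choose σ hσS hσ1 hσ2 using hWD
  have heq : ∀ s ∈ S, ∀ s' ∈ S, ∀ z ∈ S, ⌊g (s - z) / c⌋ = ⌊g (s' - z) / c⌋ →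
      g (s - z) = g (s' - z) := by
    intro s hs s' hs' z hz h
    by_contra hne
    have h1 := hsep s hs z hz s' hs' z hz hne
    have h2 := Int.abs_sub_lt_one_of_floor_eq_floor h
    rw [← sub_div, abs_div, abs_of_pos hc, div_lt_one hc] at h2
    linarith
  obtain ⟨L, hL⟩ := exists_nat_gt (g (y - x) / c + 1)
  obtain ⟨P, hP⟩ := exists_nat_gt (M * (8 * C) / c)
  -- choose N
  obtain ⟨N, hN⟩ : ∃ N : ℕ, N = (P + 1) * (2 * L + 1) + 1 := ⟨_, rfl⟩
  have hN1 : (1 : ℝ) ≤ N := by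
    have : 1 ≤ N := by omega
    exact_mod_cast this
  let pt : ℕ × ℕ → ℝ × ℝ := fun ij => σ (2 * ij.1 * C) ((2 * N + 2 + 2 * ij.2) * C)
  let f : ℕ × ℕ → ℤ × ℤ := fun ij =>
    (⌊g (pt ij - x) / c⌋, ⌊g (pt ij - x) / c⌋ - ⌊g (pt ij - y) / c⌋)
  let A : Finset (ℕ × ℕ) := Finset.range N ×ˢ Finset.range N
  let B : Finset (ℤ × ℤ) := Finset.Ico (0 : ℤ) ((P * N + 1 : ℕ) : ℤ) ×ˢ Finset.Icc (-(L : ℤ)) L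
  have hptS : ∀ ij, pt ij ∈ S := fun ij => hσS _ _
  have hb1 : ∀ ij, 2 * ij.1 * C ≤ (pt ij).1 ∧ (pt ij).1 ≤ 2 * ij.1 * C + C :=
    fun ij => hσ1 _ _
  have hb2 : ∀ ij, (2 * N + 2 + 2 * ij.2) * C ≤ (pt ij).2 ∧
      (pt ij).2 ≤ (2 * N + 2 + 2 * ij.2) * C + C :=
    fun ij => hσ2 _ _
  have hA : ∀ ij ∈ A, (ij.1 : ℝ) + 1 ≤ N ∧ (ij.2 : ℝ) + 1 ≤ N := by
    intro ij hij
    simp only [A, Finset.mem_product, Finset.mem_range] at hij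
    exact ⟨by exact_mod_cast hij.1, by exact_mod_cast hij.2⟩
  have hinj_pt : Function.Injective pt := by
    intro a b hab
    have key : ∀ m n : ℕ, ∀ r : ℝ, 2 * (m : ℝ) * C ≤ r → r ≤ 2 * (n : ℝ) * C + C → m ≤ n := by
      intro m n r h1 h2
      by_contra hlt
      have : (n : ℝ) + 1 ≤ m := by
        have : n + 1 ≤ m := by omega
        exact_mod_cast this
      nlinarith
    have a1 := hb1 a
    have a2 := hb2 a
    have b1 := hb1 b
    have b2 := hb2 b
    rw [hab] at a1 a2
    have k1 := key _ _ _ a1.1 b1.2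
    have k2 := key _ _ _ b1.1 a1.2
    have k3 := key a.2 b.2 ((pt b).2 - (2 * N + 2) * C) (by linarith [a2.1]) (by linarith [b2.2])
    have k4 := key b.2 a.2 ((pt b).2 - (2 * N + 2) * C) (by linarith [b2.1]) (by linarith [a2.2])
    exact Prod.ext (le_antisymm k1 k2) (le_antisymm k3 k4)
  have hcross : ∀ ij ∈ A, 0 < crossD (y - x) (pt ij - x) := by
    intro ij hij
    obtain ⟨h1, h2⟩ := hA ij hij
    have a1 := hb1 ij
    have a2 := hb2 ij
    have i0 : (0 : ℝ) ≤ ij.1 := Nat.cast_nonneg _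
    have j0 : (0 : ℝ) ≤ ij.2 := Nat.cast_nonneg _
    have c1 : (ij.1 : ℝ) * C + C ≤ N * C := by nlinarith
    have c2 : 0 ≤ (ij.1 : ℝ) * C := by positivity
    have c3 : 0 ≤ (ij.2 : ℝ) * C := by positivity
    have u1 : C ≤ (y - x).1 := by simp only [Prod.fst_sub]; linarith
    have u2 : |(y - x).2| ≤ C := by
      rw [abs_le]; simp only [Prod.snd_sub]; constructor <;> linarith
    have v1 : |(pt ij - x).1| ≤ 2 * N * C := by
      rw [abs_le]; simp only [Prod.fst_sub]; constructor <;> linarith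
    have v2 : 2 * N * C < (pt ij - x).2 := by
      simp only [Prod.snd_sub]; linarith
    have hw : (y - x).2 * (pt ij - x).1 ≤ C * (2 * N * C) := by
      calc _ ≤ |(y - x).2 * (pt ij - x).1| := le_abs_self _
        _ = |(y - x).2| * |(pt ij - x).1| := abs_mul _ _
        _ ≤ _ := mul_le_mul u2 v1 (abs_nonneg _) hC.le
    have hw2 : C * (2 * N * C) < (y - x).1 * (pt ij - x).2 := by
      have : 0 ≤ 2 * N * C := by positivity
      nlinarith
    unfold crossD
    linarith
  have hmaps : ∀ ij ∈ A, f ij ∈ B := by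
    intro ij hij
    obtain ⟨h1, h2⟩ := hA ij hij
    have a1 := hb1 ij
    have a2 := hb2 ij
    have i0 : (0 : ℝ) ≤ ij.1 := Nat.cast_nonneg _
    have j0 : (0 : ℝ) ≤ ij.2 := Nat.cast_nonneg _
    have c1 : (ij.1 : ℝ) * C + C ≤ N * C := by nlinarith
    have c1' : (ij.2 : ℝ) * C + C ≤ N * C := by nlinarith
    have c0 : C ≤ N * C := by nlinarith
    have c2 : 0 ≤ (ij.1 : ℝ) * C := by positivity
    have c3 : 0 ≤ (ij.2 : ℝ) * C := by positivity
    have hnorm : ‖pt ij - x‖ ≤ 8 * C * N := by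
      rw [Prod.norm_def, Real.norm_eq_abs, Real.norm_eq_abs]
      apply max_le <;> rw [abs_le] <;> simp only [Prod.fst_sub, Prod.snd_sub] <;>
        constructor <;> linarith
    simp only [f, B, Finset.mem_product, Finset.mem_Ico, Finset.mem_Icc]
    have hgx : g (pt ij - x) / c < P * N + 1 := by
      have : g (pt ij - x) ≤ M * (8 * C * N) := (hM _).trans (by gcongr)
      calc g (pt ij - x) / c ≤ M * (8 * C * N) / c := by gcongr
        _ = M * (8 * C) / c * N := by ring
        _ ≤ P * N := by gcongr
        _ < _ := by linarith
    have d1 : g (pt ij - x) ≤ g (pt ij - y) + g (y - x) := by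
      have := htri (pt ij - y) (y - x)
      rwa [sub_add_sub_cancel] at this
    have d2 : g (pt ij - y) ≤ g (pt ij - x) + g (y - x) := by
      have := htri (pt ij - x) (x - y)
      rw [sub_add_sub_cancel] at this
      rwa [← hneg (x - y), neg_sub] at this
    have d1' : g (pt ij - x) / c ≤ g (pt ij - y) / c + g (y - x) / c := by
      rw [← add_div]; gcongr
    have d2' : g (pt ij - y) / c ≤ g (pt ij - x) / c + g (y - x) / c := by
      rw [← add_div]; gcongr
    have l1 := Int.floor_le (g (pt ij - x) / c)
    have l2 := Int.lt_floor_add_one (g (pt ij - x) / c)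
    have l3 := Int.floor_le (g (pt ij - y) / c)
    have l4 := Int.lt_floor_add_one (g (pt ij - y) / c)
    refine ⟨⟨?_, ?_⟩, ?_, ?_⟩
    · exact Int.floor_nonneg.2 (div_nonneg (hg0 _) hc.le)
    · rw [Int.floor_lt]; push_cast; exact hgx
    · rw [← Int.cast_le (R := ℝ)]; push_cast; linarith
    · rw [← Int.cast_le (R := ℝ)]; push_cast; linarith
  have hinj : Set.InjOn f (A : Set (ℕ × ℕ)) := by
    intro a ha b hb hab
    simp only [f, Prod.mk.injEq] at hab
    obtain ⟨hab1, hab2⟩ := hab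
    have hab3 : ⌊g (pt a - y) / c⌋ = ⌊g (pt b - y) / c⌋ := by omega
    have e1 := heq _ (hptS a) _ (hptS b) x hxS hab1
    have e2 := heq _ (hptS a) _ (hptS b) y hyS hab3
    have := aux_unique g hhom hneg hpos htri hst (y - x) (pt a - x) (pt b - x)
      (hcross a ha) (hcross b hb) e1 (by rwa [sub_sub_sub_cancel_right, sub_sub_sub_cancel_right])
    exact hinj_pt (sub_left_injective this)
  have hcard := Finset.card_le_card_of_injOn f hmaps hinj
  simp only [A, B, Finset.card_product, Finset.card_range, Int.card_Ico, Int.card_Icc] at hcard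
  have t1 : (((P * N + 1 : ℕ) : ℤ) - 0).toNat = P * N + 1 := by omega
  have t2 : ((L : ℤ) + 1 - -(L : ℤ)).toNat = 2 * L + 1 := by omega
  rw [t1, t2] at hcard
  have hN' : 1 ≤ N := by omega
  have : (P * N + 1) * (2 * L + 1) ≤ ((P + 1) * (2 * L + 1)) * N := by
    have : P * N + 1 ≤ (P + 1) * N := by nlinarith
    calc _ ≤ (P + 1) * N * (2 * L + 1) := Nat.mul_le_mul_right _ this
      _ = _ := by ring
  have h5 : N * N ≤ (N - 1) * N := by
    rw [show N - 1 = (P + 1) * (2 * L + 1) by omega]; exact hcard.trans this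
  have h6 := Nat.le_of_mul_le_mul_right h5 (by omega)
  omega

/-- If `K ⊆ ℝ²` is a compact symmetric convex body whose boundary contains no
nondegenerate line segment (i.e. `K` is strictly convex), and `S ⊆ ℝ²` is
well-distributed, then `Δ_K(S)` is not separated. -/
theorem stmt_19 (K : Set (ℝ × ℝ)) (hK : Convex ℝ K) (hcomp : IsCompact K)
    (hsym : K = -K) (hint : (interior K).Nonempty)
    (hstrict : ¬ ∃ A B : ℝ × ℝ, A ≠ B ∧ segment ℝ A B ⊆ frontier K)
    (S : Set (ℝ × ℝ))
    (hWD : ∃ C > 0, ∀ a b : ℝ, ∃ s ∈ S, s.1 ∈ Icc a (a + C) ∧ s.2 ∈ Icc b (b + C)) :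
    ¬ ∃ c > 0, ∀ x ∈ S, ∀ y ∈ S, ∀ x' ∈ S, ∀ y' ∈ S,
      gauge K (x - y) ≠ gauge K (x' - y') →
      c ≤ |gauge K (x - y) - gauge K (x' - y')| := by
  rintro ⟨c, hc, hsep⟩
  obtain ⟨C, hC, hWD⟩ := hWD
  have hsymm : ∀ x ∈ K, -x ∈ K := by
    intro x hx
    rw [hsym] at hx
    exact hx
  have h0 : (0 : ℝ × ℝ) ∈ interior K := by
    obtain ⟨z, hz⟩ := hint
    have hz' : -z ∈ K := hsymm z (interior_subset hz)
    have := hK.combo_interior_self_mem_interior hz hz' (a := 1 / 2) (b := 1 / 2)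
      (by norm_num) (by norm_num) (by norm_num)
    simpa using this
  have hnhds : K ∈ nhds (0 : ℝ × ℝ) := mem_interior_iff_mem_nhds.1 h0
  have habs : Absorbent ℝ K := absorbent_nhds_zero hnhds
  have hsc : StrictConvex ℝ K := by
    apply hK.strictConvex'
    intro A hA B hB hAB
    by_contra hno
    push Not at hno
    apply hstrict
    refine ⟨A, B, hAB, ?_⟩
    intro z hz
    have hzK : z ∈ K := hK.segment_subset hA.1 hB.1 hz
    refine ⟨subset_closure hzK, ?_⟩
    rw [segment_eq_image_lineMap] at hz
    obtain ⟨t, -, rfl⟩ := hz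
    exact hno t
  have hpos : ∀ v : ℝ × ℝ, v ≠ 0 → 0 < gauge K v := fun v hv =>
    (gauge_pos habs (hcomp.isVonNBounded ℝ)).2 hv
  have hhom : ∀ t : ℝ, 0 ≤ t → ∀ v : ℝ × ℝ, gauge K (t • v) = t * gauge K v := by
    intro t ht v
    rw [gauge_smul_of_nonneg ht, smul_eq_mul]
  have hmem : ∀ v : ℝ × ℝ, gauge K v = 1 → v ∈ K := by
    intro v hv
    have := (gauge_le_one_iff_mem_closure hK hnhds).1 hv.le
    rwa [hcomp.isClosed.closure_eq] at this
  obtain ⟨r, hr, hball⟩ := Metric.mem_nhds_iff.1 hnhds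
  refine aux_count (gauge K) hhom (fun v => gauge_neg hsymm v) hpos
    (fun u v => gauge_add_le hK habs u v) ?_ (1 / r) (by positivity) ?_ S C hC hWD c hc hsep
  · intro u v huv
    have hu : u ≠ 0 := by rintro rfl; simp [crossD] at huv
    have hv : v ≠ 0 := by rintro rfl; simp [crossD] at huv
    have ha := hpos u hu
    have hb := hpos v hv
    obtain ⟨a, haa⟩ : ∃ a, a = gauge K u := ⟨_, rfl⟩
    obtain ⟨b, hbb⟩ : ∃ b, b = gauge K v := ⟨_, rfl⟩
    rw [← haa] at ha
    rw [← hbb] at hb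
    rw [← haa, ← hbb]
    have hA : a⁻¹ • u ∈ K := hmem _ (by
      rw [hhom _ (by positivity), ← haa]; field_simp)
    have hB : b⁻¹ • v ∈ K := hmem _ (by
      rw [hhom _ (by positivity), ← hbb]; field_simp)
    have hAB : a⁻¹ • u ≠ b⁻¹ • v := by
      intro h
      apply huv
      have hu' : u = (a * b⁻¹) • v := by
        rw [mul_smul, ← h, smul_smul, mul_inv_cancel₀ ha.ne', one_smul]
      rw [hu']; simp only [crossD, Prod.smul_fst, Prod.smul_snd, smul_eq_mul]; ring
    have hin := hsc hA hB hAB (a := a / (a + b)) (b := b / (a + b)) (by positivity)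
      (by positivity) (by field_simp)
    have hlt := (gauge_lt_one_iff_mem_interior hK hnhds).2 hin
    have hrew : (a / (a + b)) • a⁻¹ • u + (b / (a + b)) • b⁻¹ • v = (a + b)⁻¹ • (u + v) := by
      rw [smul_smul, smul_smul, smul_add]
      congr 2 <;> field_simp
    rw [hrew, hhom _ (by positivity), inv_mul_lt_iff₀ (by positivity), mul_one] at hlt
    exact hlt
  · intro v
    have h3 : r * gauge K v ≤ ‖v‖ := mul_gauge_le_norm hball
    rw [one_div, ← div_eq_inv_mul, le_div_iff₀ hr]
    linarith
end
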